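/- The cycle graph C_4 on four vertices has growth rate γ(C_4) = 2 + 2/√3. (This corrects a calculation error in Atar–Athreya–Kang, who claimed 3.21 < γ(C_4).) -/

import Mathlib

open MeasureTheory Filter Topology
open scoped ENNReal Classical

/-- The ballistic deposition height process on a graph `G`, started from `h0`,
driven by the sequence of chosen vertices `X`. -/
noncomputable def heightProcess {V : Type*} [Fintype V] (G : SimpleGraph V)
    (h0 : V → ℕ) (X : ℕ → V) : ℕ → V → ℕ
  | 0 => h0
  | n + 1 => fun x =>
      if x = X n then
        1 + Finset.univ.sup (fun y =>
          if y = x ∨ G.Adj x y then heightProcess G h0 X n y else 0)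
      else heightProcess G h0 X n x

/-- `X` is an i.i.d. sequence of uniformly distributed `V`-valued random variables on `(Ω, μ)`:
every finite cylinder event has the product-of-uniform probabilities. -/
def IsUniformIID {V : Type*} [Fintype V] {Ω : Type*} [MeasurableSpace Ω]
    (μ : Measure Ω) (X : ℕ → Ω → V) : Prop :=
  (∀ (n : ℕ) (v : V), MeasurableSet {ω | X n ω = v}) ∧
  (∀ (n : ℕ) (f : ℕ → V), μ {ω | ∀ k < n, X k ω = f k} = (Fintype.card V : ℝ≥0∞)⁻¹ ^ n)

/-- `γ` is the growth rate of `G`: `γ > 0` and, for any i.i.d. uniform driving sequence,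
almost surely `(#V/n) · max_x H_{x,n} → γ` and `(#V/n) · min_x H_{x,n} → γ`. -/
def IsGrowthRate {V : Type*} [Fintype V] (G : SimpleGraph V) (γ : ℝ) : Prop :=
  0 < γ ∧
  ∀ {Ω : Type} [MeasurableSpace Ω] (μ : Measure Ω) [IsProbabilityMeasure μ]
    (X : ℕ → Ω → V), IsUniformIID μ X →
    (∀ᵐ ω ∂μ, Tendsto (fun n : ℕ =>
        (Fintype.card V : ℝ) *
          (⨆ x : V, (heightProcess G (fun _ => 0) (fun k => X k ω) n x : ℝ)) / n)
      atTop (𝓝 γ)) ∧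
    (∀ᵐ ω ∂μ, Tendsto (fun n : ℕ =>
        (Fintype.card V : ℝ) *
          (⨅ x : V, (heightProcess G (fun _ => 0) (fun k => X k ω) n x : ℝ)) / n)
      atTop (𝓝 γ))


/-- The cycle graph `C₄` on four vertices, with edges `{1,2}, {2,3}, {3,4}, {4,1}`. -/
def cycleFour : SimpleGraph (Fin 4) :=
  SimpleGraph.fromRel fun i j => j = i + 1

open ProbabilityTheory
open scoped NNReal

/-!
If a function `Φ` of the heights gains the same amount `β` on average in every state, then
Hoeffding's inequality and Borel–Cantelli give `Φ(H_n) / n → β` almost surely. On a connected graph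
the minimal height trails the maximal one by `o(n)`: every vertex is hit linearly often, and a hit
at `y` lifts `y` above all its neighbours. So it suffices to find such a `Φ` at bounded distance
from the maximum.

In a cocktail party graph on `N` vertices, such as `C₄`, every deposit raises the maximum `M` by
one, except a deposit at the antipode of a unique highest vertex, which instead lowers by one the
gap `D` to the second highest level. A deposit at that highest vertex raises `D` by one, and every
other deposit resets `D` to `1`. Hence the drift of `M + c * r ^ D` is independent of `D > 0` once
`r ^ 2 - N * r + 1 = 0`, and `c` is chosen so that the drift at `D = 0` is the same.
-/

section DriftLaw

variable {V S : Type*} {step : S → V → S} {f : S → ℝ}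

lemma eq_foldl_ofFn {s : ℕ → S} {x : ℕ → V} (hs : ∀ n, s (n + 1) = step (s n) (x n)) (n : ℕ) :
    s n = (List.ofFn fun i : Fin n => x i).foldl step (s 0) := by
  induction n with
  | zero => simp
  | succ n ih =>
    rw [hs, ih, List.ofFn_succ_last, List.foldl_concat]
    rfl

variable [Fintype V] [Nonempty V]

lemma sum_exp_mul_sub_mean_le {d : V → ℝ} {C β : ℝ} (hd : ∀ v, |d v| ≤ C)
    (hβ : ∑ v, d v = Fintype.card V * β) (t : ℝ) :
    ∑ v, Real.exp (t * (d v - β)) ≤ Fintype.card V * Real.exp (C ^ 2 * t ^ 2 / 2) := by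
  let _ : MeasurableSpace V := ⊤
  have hcard : (0 : ℝ) < Fintype.card V := by exact_mod_cast Fintype.card_pos
  have hmean : ∫ v, d v ∂(PMF.uniformOfFintype V).toMeasure = β := by
    simp [PMF.integral_eq_sum, ← Finset.mul_sum, hβ, hcard.ne']
  have hoeffding := (hasSubgaussianMGF_of_mem_Icc
    (μ := (PMF.uniformOfFintype V).toMeasure) (X := d) (measurable_of_finite d).aemeasurable
    (ae_of_all _ fun v => abs_le.1 (hd v))).mgf_le t
  have hwidth : (((‖C - -C‖₊ / 2) ^ 2 : ℝ≥0) : ℝ) = C ^ 2 := by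
    simp [← two_mul]
  rw [hmean, hwidth, mgf, PMF.integral_eq_sum] at hoeffding
  simp only [PMF.uniformOfFintype_apply, ENNReal.toReal_inv, ENNReal.toReal_natCast, smul_eq_mul,
    ← Finset.mul_sum] at hoeffding
  rwa [inv_mul_le_iff₀ hcard] at hoeffding

lemma sum_exp_mul_foldl_le {C β : ℝ} (hC : ∀ s v, |f (step s v) - f s| ≤ C)
    (hβ : ∀ s, ∑ v, (f (step s v) - f s) = Fintype.card V * β) (t : ℝ) (n : ℕ) (s : S) :
    ∑ w : Fin n → V, Real.exp (t * (f ((List.ofFn w).foldl step s) - f s - n * β)) ≤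
      (Fintype.card V * Real.exp (C ^ 2 * t ^ 2 / 2)) ^ n := by
  induction n generalizing s with
  | zero => simp
  | succ n ih =>
    calc ∑ w : Fin (n + 1) → V,
          Real.exp (t * (f ((List.ofFn w).foldl step s) - f s - (n + 1 : ℕ) * β))
        = ∑ v, Real.exp (t * (f (step s v) - f s - β)) * ∑ w : Fin n → V,
            Real.exp (t * (f ((List.ofFn w).foldl step (step s v)) - f (step s v) - n * β)) := by
          rw [← (Fin.consEquiv fun _ => V).sum_comp, Fintype.sum_prod_type]
          simp only [Fin.consEquiv, Equiv.coe_fn_mk, List.ofFn_cons, List.foldl_cons,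
            Finset.mul_sum, ← Real.exp_add]
          refine Finset.sum_congr rfl fun v _ => Finset.sum_congr rfl fun w _ => ?_
          congr 1
          push_cast
          ring
      _ ≤ ∑ v, Real.exp (t * (f (step s v) - f s - β)) *
            (Fintype.card V * Real.exp (C ^ 2 * t ^ 2 / 2)) ^ n :=
          Finset.sum_le_sum fun v _ => by gcongr; exact ih (step s v)
      _ ≤ (Fintype.card V * Real.exp (C ^ 2 * t ^ 2 / 2)) ^ (n + 1) := by
          rw [← Finset.sum_mul, pow_succ' _ n]
          gcongr
          exact sum_exp_mul_sub_mean_le (hC s) (hβ s) t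

lemma hasSubgaussianMGF_foldl [MeasurableSpace V] [MeasurableSingletonClass V] {C : ℝ≥0} {β : ℝ}
    (hC : ∀ s v, |f (step s v) - f s| ≤ C)
    (hβ : ∀ s, ∑ v, (f (step s v) - f s) = Fintype.card V * β) (n : ℕ) (s : S) :
    HasSubgaussianMGF (fun w : Fin n → V => f ((List.ofFn w).foldl step s) - f s - n * β)
      (n * C ^ 2) (PMF.uniformOfFintype (Fin n → V)).toMeasure where
  integrable_exp_mul _ := .of_finite
  mgf_le t := by
    have hexp : Real.exp (((n * C ^ 2 : ℝ≥0) : ℝ) * t ^ 2 / 2) =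
        Real.exp (C ^ 2 * t ^ 2 / 2) ^ n := by
      rw [← Real.exp_nat_mul]
      push_cast
      ring_nf
    rw [hexp, mgf, PMF.integral_eq_sum]
    simp only [PMF.uniformOfFintype_apply, ENNReal.toReal_inv, ENNReal.toReal_natCast, smul_eq_mul,
      ← Finset.mul_sum]
    rw [inv_mul_le_iff₀ (by exact_mod_cast Fintype.card_pos), Fintype.card_fun, Fintype.card_fin,
      Nat.cast_pow, ← mul_pow]
    exact sum_exp_mul_foldl_le hC hβ t n s

end DriftLaw

namespace IsUniformIID

variable {V : Type*} [Fintype V] {Ω : Type*} [MeasurableSpace Ω] {μ : Measure Ω} {X : ℕ → Ω → V}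

lemma measurable [MeasurableSpace V] [MeasurableSingletonClass V] (hX : IsUniformIID μ X) (n : ℕ) :
    Measurable (X n) :=
  measurable_to_countable' (hX.1 n)

variable [Nonempty V]

lemma isProbabilityMeasure (hX : IsUniformIID μ X) : IsProbabilityMeasure μ where
  measure_univ := by simpa using hX.2 0 (fun _ => Classical.arbitrary V)

lemma map_word [MeasurableSpace V] [MeasurableSingletonClass V] (hX : IsUniformIID μ X) (n : ℕ) :
    μ.map (fun ω (i : Fin n) => X i ω) = (PMF.uniformOfFintype (Fin n → V)).toMeasure := by
  refine Measure.ext_of_singleton fun w => ?_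
  have hcylinder : (fun ω (i : Fin n) => X i ω) ⁻¹' {w} =
      {ω | ∀ k < n, X k ω = if hk : k < n then w ⟨k, hk⟩ else Classical.arbitrary V} := by
    ext ω
    simp +contextual [funext_iff, Fin.forall_iff]
  rw [Measure.map_apply (measurable_pi_lambda _ fun i : Fin n => hX.measurable i)
    (measurableSet_singleton w), hcylinder, hX.2, PMF.toMeasure_apply_singleton _ _
    (measurableSet_singleton w)]
  simp [ENNReal.inv_pow]

variable {S : Type*} {step : S → V → S} {f : S → ℝ} {s : ℕ → Ω → S} {s₀ : S}

lemma hasSubgaussianMGF_of_drift (hX : IsUniformIID μ X) (hs₀ : ∀ ω, s 0 ω = s₀)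
    (hs : ∀ n ω, s (n + 1) ω = step (s n ω) (X n ω)) {C : ℝ≥0} {β : ℝ}
    (hC : ∀ s v, |f (step s v) - f s| ≤ C)
    (hβ : ∀ s, ∑ v, (f (step s v) - f s) = Fintype.card V * β) (n : ℕ) :
    HasSubgaussianMGF (fun ω => f (s n ω) - f s₀ - n * β) (n * C ^ 2) μ := by
  let _ : MeasurableSpace V := ⊤
  have hfoldl (ω : Ω) : s n ω = (List.ofFn fun i : Fin n => X i ω).foldl step s₀ := by
    rw [← hs₀ ω]
    exact eq_foldl_ofFn (s := (s · ω)) (hs · ω) n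
  simp only [hfoldl]
  refine .of_map (Y := fun ω (i : Fin n) => X i ω)
    (measurable_pi_lambda _ fun i : Fin n => hX.measurable i).aemeasurable
    (X := fun w : Fin n → V => f ((List.ofFn w).foldl step s₀) - f s₀ - n * β) ?_
  rw [hX.map_word]
  exact hasSubgaussianMGF_foldl hC hβ n s₀

lemma ae_eventually_lt_of_drift (hX : IsUniformIID μ X) (hs₀ : ∀ ω, s 0 ω = s₀)
    (hs : ∀ n ω, s (n + 1) ω = step (s n ω) (X n ω)) {C β : ℝ}
    (hC : ∀ s v, |f (step s v) - f s| ≤ C)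
    (hβ : ∀ s, ∑ v, (f (step s v) - f s) = Fintype.card V * β) {ε : ℝ} (hε : 0 < ε) :
    ∀ᵐ ω ∂μ, ∀ᶠ n : ℕ in atTop, f (s n ω) - f s₀ - n * β < ε * n := by
  have := hX.isProbabilityMeasure
  set K : ℝ≥0 := C.toNNReal + 1
  have hK (s : S) (v : V) : |f (step s v) - f s| ≤ K := by
    simp only [K, NNReal.coe_add, NNReal.coe_one]
    linarith [hC s v, Real.le_coe_toNNReal C]
  have htail (n : ℕ) : μ {ω | ε * n ≤ f (s n ω) - f s₀ - n * β} ≤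
      ENNReal.ofReal (Real.exp (-ε ^ 2 / (2 * K ^ 2)) ^ n) := by
    rw [← ofReal_measureReal]
    refine ENNReal.ofReal_le_ofReal (((hX.hasSubgaussianMGF_of_drift hs₀ hs hK hβ n).measure_ge_le
      (by positivity)).trans_eq ?_)
    rw [← Real.exp_nat_mul]
    rcases n.eq_zero_or_pos with rfl | _
    · simp
    · push_cast
      field_simp
  have hq : Real.exp (-ε ^ 2 / (2 * K ^ 2)) < 1 := by
    rw [Real.exp_lt_one_iff, neg_div, neg_lt_zero]
    positivity
  have hsum : ∑' n : ℕ, μ {ω | ε * n ≤ f (s n ω) - f s₀ - n * β} ≠ ∞ :=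
    ne_top_of_le_ne_top
      (summable_geometric_of_lt_one (Real.exp_pos _).le hq).tsum_ofReal_ne_top
      (ENNReal.tsum_le_tsum htail)
  filter_upwards [ae_eventually_notMem hsum] with ω hω
  filter_upwards [hω] with n hn
  exact not_le.1 hn

theorem ae_tendsto_div_of_drift (hX : IsUniformIID μ X) (hs₀ : ∀ ω, s 0 ω = s₀)
    (hs : ∀ n ω, s (n + 1) ω = step (s n ω) (X n ω)) {C β : ℝ}
    (hC : ∀ s v, |f (step s v) - f s| ≤ C)
    (hβ : ∀ s, ∑ v, (f (step s v) - f s) = Fintype.card V * β) :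
    ∀ᵐ ω ∂μ, Tendsto (fun n : ℕ => f (s n ω) / n) atTop (𝓝 β) := by
  have hC_neg (s : S) (v : V) : |-f (step s v) - -f s| ≤ C := by
    rw [neg_sub_neg, abs_sub_comm]
    exact hC s v
  have hβ_neg (s : S) : ∑ v, (-f (step s v) - -f s) = Fintype.card V * -β := by
    rw [mul_neg, ← hβ s, ← Finset.sum_neg_distrib]
    exact Finset.sum_congr rfl fun v _ => by ring
  have hclose (m : ℕ) : ∀ᵐ ω ∂μ, ∀ᶠ n : ℕ in atTop,
      |f (s n ω) - f s₀ - n * β| < 1 / (m + 1 : ℝ) * n := by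
    filter_upwards [hX.ae_eventually_lt_of_drift hs₀ hs hC hβ (Nat.one_div_pos_of_nat (n := m)),
      hX.ae_eventually_lt_of_drift (f := fun s => -f s) hs₀ hs hC_neg hβ_neg
        (Nat.one_div_pos_of_nat (n := m))]
      with ω hupper hlower
    filter_upwards [hupper, hlower] with n hn hn'
    exact abs_lt.2 ⟨by linarith, hn⟩
  filter_upwards [ae_all_iff.2 hclose] with ω hω
  have hcentered : Tendsto (fun n : ℕ => (f (s n ω) - f s₀ - n * β) / n) atTop (𝓝 0) := by
    refine Metric.tendsto_nhds.2 fun ε hε => ?_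
    obtain ⟨m, hm⟩ := exists_nat_one_div_lt hε
    filter_upwards [hω m, eventually_gt_atTop 0] with n hn hn0
    have hn0' : (0 : ℝ) < n := by exact_mod_cast hn0
    rw [Real.dist_eq, sub_zero, abs_div, abs_of_pos hn0', div_lt_iff₀ hn0']
    exact hn.trans (by gcongr)
  have hlim := (hcentered.add (tendsto_const_div_atTop_nhds_zero_nat (f s₀))).add_const β
  rw [add_zero, zero_add] at hlim
  refine hlim.congr' ?_
  filter_upwards [eventually_ne_atTop 0] with n hn
  field_simp
  ring

theorem ae_tendsto_count_div (hX : IsUniformIID μ X) (v : V) :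
    ∀ᵐ ω ∂μ, Tendsto (fun n : ℕ => (Nat.count (fun k => X k ω = v) n : ℝ) / n) atTop
      (𝓝 (Fintype.card V : ℝ)⁻¹) := by
  refine hX.ae_tendsto_div_of_drift (step := fun (m : ℕ) w => m + if w = v then 1 else 0)
    (f := Nat.cast) (C := 1) (fun ω => Nat.count_zero _) (fun n ω => Nat.count_succ _ _) ?_ ?_
  · intro m w
    split_ifs <;> simp
  · simp

end IsUniformIID

/-- `u` is dominated by `w` up to an asymptotically negligible lag: for every `q < 1`, the value
`u (q t)` is eventually at most `w t`. The time `t` is real, so that lags compose. -/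
def EventuallyLagLE {α : Type*} [LE α] (u w : ℕ → α) : Prop :=
  ∀ q ∈ Set.Ioo (0 : ℝ) 1, ∀ᶠ t : ℝ in atTop, u ⌊q * t⌋₊ ≤ w ⌊t⌋₊

lemma tendsto_floor_mul_div_of_tendsto_div {u : ℕ → ℝ} {β : ℝ}
    (hu : Tendsto (fun n => u n / n) atTop (𝓝 β)) {q : ℝ} (hq : 0 < q) :
    Tendsto (fun t : ℝ => u ⌊q * t⌋₊ / t) atTop (𝓝 (β * q)) := by
  have hfloor : Tendsto (fun t : ℝ => ⌊q * t⌋₊) atTop atTop :=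
    tendsto_nat_floor_atTop.comp (tendsto_id.const_mul_atTop hq)
  refine ((hu.comp hfloor).mul (tendsto_nat_floor_mul_div_atTop hq.le)).congr' ?_
  filter_upwards [hfloor.eventually_ne_atTop 0] with t ht
  exact div_mul_div_cancel₀ (Nat.cast_ne_zero.2 ht)

namespace EventuallyLagLE

variable {α : Type*} [Preorder α]

lemma refl_of_monotone {u : ℕ → α} (hu : Monotone u) : EventuallyLagLE u u := by
  intro q hq
  filter_upwards [eventually_ge_atTop 0] with t ht
  exact hu (Nat.floor_mono (mul_le_of_le_one_left ht hq.2.le))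

lemma trans {u v w : ℕ → α} (huv : EventuallyLagLE u v) (hvw : EventuallyLagLE v w) :
    EventuallyLagLE u w := by
  intro q hq
  have hsqrt : √q ∈ Set.Ioo (0 : ℝ) 1 :=
    ⟨Real.sqrt_pos.2 hq.1, (Real.sqrt_lt' one_pos).2 (by simpa using hq.2)⟩
  filter_upwards [(tendsto_id.const_mul_atTop hsqrt.1).eventually (huv _ hsqrt), hvw _ hsqrt]
    with t ht ht'
  rw [id, ← mul_assoc, Real.mul_self_sqrt hq.1.le] at ht
  exact ht.trans ht'

lemma tendsto_div {u w : ℕ → ℝ} {β : ℝ} (huw : EventuallyLagLE u w)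
    (hwu : ∀ n, w n ≤ u n) (hu : Tendsto (fun n => u n / n) atTop (𝓝 β)) :
    Tendsto (fun n => w n / n) atTop (𝓝 β) := by
  refine tendsto_order.2 ⟨fun a ha => ?_, fun a ha => ?_⟩
  · have hcont : Tendsto (fun q : ℝ => β * q) (𝓝[<] 1) (𝓝 β) := by
      simpa using (tendsto_id.const_mul β).mono_left (nhdsWithin_le_nhds (a := (1 : ℝ)))
    obtain ⟨q, hqa, hq⟩ := ((hcont.eventually_const_lt ha).and
      (Ioo_mem_nhdsLT (zero_lt_one' ℝ))).exists
    have hlag : Tendsto (fun n : ℕ => u ⌊q * n⌋₊ / n) atTop (𝓝 (β * q)) :=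
      (tendsto_floor_mul_div_of_tendsto_div hu hq.1).comp tendsto_natCast_atTop_atTop
    filter_upwards [hlag.eventually_const_lt hqa, tendsto_natCast_atTop_atTop.eventually (huw q hq)]
      with n hn hlag_n
    rw [Nat.floor_natCast] at hlag_n
    exact hn.trans_le (by gcongr)
  · filter_upwards [hu.eventually_lt_const ha] with n hn
    exact (div_le_div_of_nonneg_right (hwu n) n.cast_nonneg).trans_lt hn

end EventuallyLagLE

section Heights

variable {V : Type*} [Fintype V] {G : SimpleGraph V} {h : V → ℕ} {x y : V}

/-- The height function after a single deposit at `v` on top of the heights `h`. -/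
noncomputable def deposit (G : SimpleGraph V) (h : V → ℕ) (v : V) : V → ℕ :=
  Function.update h v (1 + ({y | y = v ∨ G.Adj v y} : Finset V).sup h)

lemma heightProcess_succ (h₀ : V → ℕ) (X : ℕ → V) (n : ℕ) :
    heightProcess G h₀ X (n + 1) = deposit G (heightProcess G h₀ X n) (X n) := by
  ext x
  rw [deposit, Function.update_apply]
  by_cases hx : x = X n
  · subst hx
    simp [heightProcess, Finset.sup_ite]
  · simp [heightProcess, hx]

lemma deposit_of_ne (hxy : x ≠ y) : deposit G h y x = h x :=
  Function.update_of_ne hxy _ _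

lemma sup_compl_deposit (h : V → ℕ) (v : V) :
    ({v}ᶜ : Finset V).sup (deposit G h v) = ({v}ᶜ : Finset V).sup h :=
  Finset.sup_congr rfl fun x hx => deposit_of_ne (by simpa using hx)

lemma lt_deposit_self (hxy : x = y ∨ G.Adj y x) : h x < deposit G h y y := by
  rw [deposit, Function.update_self, add_comm, Nat.lt_succ_iff]
  exact Finset.le_sup (f := h) (by simpa using hxy)

lemma le_deposit (v : V) : h ≤ deposit G h v := by
  refine le_update_iff.2 ⟨?_, fun _ _ => le_rfl⟩
  simpa [deposit] using (lt_deposit_self (G := G) (h := h) (.inl (Eq.refl v))).le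

lemma sup_deposit_le (v : V) : Finset.univ.sup (deposit G h v) ≤ Finset.univ.sup h + 1 := by
  refine Finset.sup_le fun x _ => ?_
  rw [deposit, Function.update_apply, add_comm]
  split_ifs
  · gcongr
    exact Finset.subset_univ _
  · exact (Finset.le_sup (Finset.mem_univ x)).trans (Nat.le_succ _)

variable {h₀ : V → ℕ} {X : ℕ → V}

lemma heightProcess_mono : Monotone (heightProcess G h₀ X) :=
  monotone_nat_of_le_succ fun n => by
    rw [heightProcess_succ]
    exact le_deposit _

lemma heightProcess_le_of_adj (hxy : G.Adj y x) {a b k : ℕ} (hk : k ∈ Set.Ico a b)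
    (hXk : X k = y) : heightProcess G h₀ X a x ≤ heightProcess G h₀ X b y :=
  calc heightProcess G h₀ X a x
      ≤ heightProcess G h₀ X k x := heightProcess_mono hk.1 x
    _ ≤ heightProcess G h₀ X (k + 1) y := by
        rw [heightProcess_succ, hXk]
        exact (lt_deposit_self (.inr hxy)).le
    _ ≤ heightProcess G h₀ X b y := heightProcess_mono hk.2 y

variable {p : ℝ}

lemma eventuallyLagLE_heightProcess_of_adj (hxy : G.Adj y x) (hp : 0 < p)
    (hfreq : Tendsto (fun n => (Nat.count (X · = y) n : ℝ) / n) atTop (𝓝 p)) :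
    EventuallyLagLE (heightProcess G h₀ X · x) (heightProcess G h₀ X · y) := by
  intro q hq
  have hcount : ∀ᶠ t : ℝ in atTop, Nat.count (X · = y) ⌊q * t⌋₊ < Nat.count (X · = y) ⌊t⌋₊ := by
    have hone := tendsto_floor_mul_div_of_tendsto_div hfreq one_pos
    simp only [one_mul] at hone
    filter_upwards [(tendsto_floor_mul_div_of_tendsto_div hfreq hq.1).eventually_lt hone
      (by gcongr; exact hq.2), eventually_gt_atTop 0] with t hlt ht
    rw [div_lt_div_iff_of_pos_right ht] at hlt
    exact_mod_cast hlt
  filter_upwards [hcount] with t ht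
  obtain ⟨k, hk, hXk⟩ := Nat.exists_of_count_lt_count ht
  exact heightProcess_le_of_adj hxy hk hXk

lemma eventuallyLagLE_heightProcess_of_reachable (hxy : G.Reachable x y) (hp : 0 < p)
    (hfreq : ∀ v, Tendsto (fun n => (Nat.count (X · = v) n : ℝ) / n) atTop (𝓝 p)) :
    EventuallyLagLE (heightProcess G h₀ X · x) (heightProcess G h₀ X · y) := by
  obtain ⟨walk⟩ := hxy
  induction walk with
  | nil => exact .refl_of_monotone fun a b hab => heightProcess_mono hab _
  | cons hadj _ ih =>
    exact (eventuallyLagLE_heightProcess_of_adj hadj.symm hp (hfreq _)).trans ih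

lemma tendsto_iInf_heightProcess_div (hG : G.Connected) {β : ℝ} (hp : 0 < p)
    (hfreq : ∀ v, Tendsto (fun n => (Nat.count (X · = v) n : ℝ) / n) atTop (𝓝 p))
    (hsup : Tendsto (fun n => (⨆ x, (heightProcess G h₀ X n x : ℝ)) / n) atTop (𝓝 β)) :
    Tendsto (fun n => (⨅ x, (heightProcess G h₀ X n x : ℝ)) / n) atTop (𝓝 β) := by
  have := hG.nonempty
  refine EventuallyLagLE.tendsto_div
    (u := fun n => ⨆ x, (heightProcess G h₀ X n x : ℝ)) ?_ (fun n => ?_) hsup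
  · intro q hq
    have hlag (x y : V) :=
      eventuallyLagLE_heightProcess_of_reachable (h₀ := h₀) (hG.preconnected x y) hp hfreq q hq
    filter_upwards [eventually_all.2 fun x => eventually_all.2 (hlag x)] with t ht
    exact ciSup_le fun x => le_ciInf fun y => Nat.cast_le.2 (ht x y)
  · exact ciInf_le_ciSup (Set.finite_range _).bddBelow (Set.finite_range _).bddAbove

lemma natCast_sup_univ [Nonempty V] (h : V → ℕ) :
    ((Finset.univ.sup h : ℕ) : ℝ) = ⨆ x, (h x : ℝ) := by
  refine le_antisymm ?_ (ciSup_le fun x => Nat.cast_le.2 (Finset.le_sup (Finset.mem_univ x)))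
  obtain ⟨x, -, hx⟩ := Finset.exists_mem_eq_sup Finset.univ Finset.univ_nonempty h
  rw [hx]
  exact le_ciSup (f := fun x => (h x : ℝ)) (Set.finite_range _).bddAbove x

theorem isGrowthRate_of_potential (hG : G.Connected) {Φ : (V → ℕ) → ℝ} {B β : ℝ}
    (hΦ : ∀ h, |Φ h - (Finset.univ.sup h : ℕ)| ≤ B) (hβ : 0 < β)
    (hdrift : ∀ h, ∑ v, (Φ (deposit G h v) - Φ h) = Fintype.card V * β) :
    IsGrowthRate G (Fintype.card V * β) := by
  have := hG.nonempty
  have hcard : (0 : ℝ) < Fintype.card V := by exact_mod_cast Fintype.card_pos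
  have hincr (h : V → ℕ) (v : V) : |Φ (deposit G h v) - Φ h| ≤ 1 + 2 * B := by
    have hlower : ((Finset.univ.sup h : ℕ) : ℝ) ≤ (Finset.univ.sup (deposit G h v) : ℕ) := by
      exact_mod_cast Finset.sup_mono_fun fun x _ => le_deposit v x
    have hupper : ((Finset.univ.sup (deposit G h v) : ℕ) : ℝ) ≤ (Finset.univ.sup h : ℕ) + 1 := by
      exact_mod_cast sup_deposit_le v
    have hb := abs_le.1 (hΦ h)
    have hb' := abs_le.1 (hΦ (deposit G h v))
    exact abs_le.2 ⟨by linarith, by linarith⟩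
  refine ⟨mul_pos hcard hβ, fun {Ω} _ μ _ X hX => ?_⟩
  have hsup : ∀ᵐ ω ∂μ, Tendsto
      (fun n => (⨆ x, (heightProcess G (fun _ => 0) (fun k => X k ω) n x : ℝ)) / n)
      atTop (𝓝 β) := by
    filter_upwards [hX.ae_tendsto_div_of_drift (f := Φ)
      (s := fun n ω => heightProcess G (fun _ => 0) (fun k => X k ω) n) (fun _ => rfl)
      (fun n ω => heightProcess_succ _ _ n) hincr hdrift] with ω hω
    have hdiff : Tendsto (fun n : ℕ =>
        (Φ (heightProcess G (fun _ => 0) (fun k => X k ω) n) -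
          ⨆ x, (heightProcess G (fun _ => 0) (fun k => X k ω) n x : ℝ)) / n) atTop (𝓝 0) := by
      refine squeeze_zero_norm (fun n => ?_) (tendsto_const_div_atTop_nhds_zero_nat B)
      rw [norm_div, Real.norm_eq_abs, Real.norm_natCast, ← natCast_sup_univ]
      gcongr
      exact hΦ _
    simpa [sub_div] using hω.sub hdiff
  have hfreq : ∀ᵐ ω ∂μ, ∀ v, Tendsto (fun n => (Nat.count (fun k => X k ω = v) n : ℝ) / n) atTop
      (𝓝 (Fintype.card V : ℝ)⁻¹) :=
    ae_all_iff.2 hX.ae_tendsto_count_div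
  constructor
  · filter_upwards [hsup] with ω hω
    simpa only [mul_div_assoc] using hω.const_mul _
  · filter_upwards [hsup, hfreq] with ω hω hω'
    simpa only [mul_div_assoc] using
      (tendsto_iInf_heightProcess_div hG (inv_pos.2 hcard) hω' hω).const_mul _

end Heights

section TopGap

variable {V : Type*} [Fintype V] {h : V → ℕ} {x y : V}

/-- The gap between the largest and the second largest height, counted with multiplicity. The
truncated subtraction makes every vertex other than a highest one contribute `0`. -/
noncomputable def topGap (h : V → ℕ) : ℕ :=
  Finset.univ.sup fun x => h x - ({x}ᶜ : Finset V).sup h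

lemma sup_univ_eq_max (h : V → ℕ) (x : V) :
    Finset.univ.sup h = max (h x) (({x}ᶜ : Finset V).sup h) := by
  rw [← Finset.insert_compl_self x, Finset.sup_insert]

lemma sup_compl_le_sup_univ (h : V → ℕ) (x : V) :
    ({x}ᶜ : Finset V).sup h ≤ Finset.univ.sup h :=
  Finset.sup_mono (Finset.subset_univ _)

lemma sup_compl_eq_of_ne (hx : Finset.univ.sup h = h x) (hxy : x ≠ y) :
    ({y}ᶜ : Finset V).sup h = Finset.univ.sup h := by
  refine (sup_compl_le_sup_univ h y).antisymm ?_
  rw [hx]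
  exact Finset.le_sup (by simpa using hxy)

lemma topGap_eq_of_sup_compl_le (hx : ({x}ᶜ : Finset V).sup h ≤ h x) :
    topGap h = h x - ({x}ᶜ : Finset V).sup h := by
  refine le_antisymm (Finset.sup_le fun y _ => ?_) (Finset.le_sup (f := fun x =>
    h x - ({x}ᶜ : Finset V).sup h) (Finset.mem_univ x))
  obtain rfl | hxy := eq_or_ne x y
  · rfl
  · have hyx : h y ≤ ({x}ᶜ : Finset V).sup h := Finset.le_sup (by simpa using hxy.symm)
    have hxy' : h x ≤ ({y}ᶜ : Finset V).sup h := Finset.le_sup (by simpa using hxy)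
    simp [Nat.sub_eq_zero_of_le (hyx.trans (hx.trans hxy'))]

lemma topGap_eq_sup_univ_sub (hx : Finset.univ.sup h = h x) :
    topGap h = Finset.univ.sup h - ({x}ᶜ : Finset V).sup h := by
  rw [hx]
  exact topGap_eq_of_sup_compl_le (hx ▸ sup_compl_le_sup_univ h x)

lemma sup_compl_eq_of_topGap_eq_zero (hgap : topGap h = 0) (y : V) :
    ({y}ᶜ : Finset V).sup h = Finset.univ.sup h := by
  obtain ⟨x, -, hx⟩ := Finset.exists_mem_eq_sup Finset.univ ⟨y, Finset.mem_univ y⟩ h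
  obtain rfl | hxy := eq_or_ne x y
  · refine (sup_compl_le_sup_univ h x).antisymm ?_
    rwa [topGap_eq_sup_univ_sub hx, Nat.sub_eq_zero_iff_le] at hgap
  · exact sup_compl_eq_of_ne hx hxy

end TopGap

section GapPotential

variable {V : Type*} [Fintype V]

/-- The maximal height, corrected by a term which is exponential in the gap. For suitable `r` and
`c` its mean increment under a uniform deposit does not depend on the heights. -/
noncomputable def gapPotential (r c : ℝ) (h : V → ℕ) : ℝ :=
  (Finset.univ.sup h : ℕ) + c * r ^ topGap h

lemma abs_gapPotential_sub_sup_le {r : ℝ} (hr : r ∈ Set.Icc 0 1) (c : ℝ) (h : V → ℕ) :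
    |gapPotential r c h - (Finset.univ.sup h : ℕ)| ≤ |c| := by
  rw [gapPotential, add_sub_cancel_left, abs_mul, abs_pow, abs_of_nonneg hr.1]
  exact mul_le_of_le_one_right (abs_nonneg c) (pow_le_one₀ hr.1 hr.2)

end GapPotential

/-- Each vertex `x` has exactly one non-neighbour besides itself, its antipode `σ x`. Such a `G` is
a cocktail party graph. -/
def IsAntipode {V : Type*} (G : SimpleGraph V) (σ : V → V) : Prop :=
  ∀ x y, Gᶜ.Adj x y ↔ y = σ x

namespace IsAntipode

variable {V : Type*} {G : SimpleGraph V} {σ : V → V} {h : V → ℕ} {v x : V} {r c : ℝ}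

lemma eq_or_adj_iff (hσ : IsAntipode G σ) (x y : V) : y = x ∨ G.Adj x y ↔ y ≠ σ x := by
  rw [Ne, ← hσ, SimpleGraph.compl_adj]
  tauto

lemma apply_ne_self (hσ : IsAntipode G σ) (x : V) : σ x ≠ x :=
  ((hσ x _).2 rfl).ne.symm

lemma involutive (hσ : IsAntipode G σ) : Function.Involutive σ :=
  fun x => ((hσ _ _).1 ((hσ x _).2 rfl).symm).symm

variable [Fintype V]

lemma connected (hσ : IsAntipode G σ) (hV : 2 < Fintype.card V) : G.Connected := by
  have hreach {x y : V} (hxy : y ≠ σ x) : G.Reachable x y :=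
    ((hσ.eq_or_adj_iff x y).2 hxy).elim (fun e => e ▸ .rfl) (·.reachable)
  have : Nonempty V := Fintype.card_pos_iff.1 (by lia)
  refine ⟨fun x y => ?_⟩
  obtain rfl | hxy := eq_or_ne y (σ x)
  · obtain ⟨z, -, hz⟩ := Finset.exists_mem_notMem_of_card_lt_card
      (s := {x, σ x}) (t := Finset.univ) (Finset.card_le_two.trans_lt hV)
    simp only [Finset.mem_insert, Finset.mem_singleton, not_or] at hz
    exact (hreach hz.2).trans (hreach (hσ.involutive.injective.ne (Ne.symm hz.1)))
  · exact hreach hxy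

lemma deposit_self (hσ : IsAntipode G σ) (h : V → ℕ) (v : V) :
    deposit G h v v = 1 + ({σ v}ᶜ : Finset V).sup h := by
  rw [deposit, Function.update_self]
  congr 2
  ext y
  simp [hσ.eq_or_adj_iff]

lemma sup_deposit_of_sup_compl_eq (hσ : IsAntipode G σ)
    (hv : ({σ v}ᶜ : Finset V).sup h = Finset.univ.sup h) :
    Finset.univ.sup (deposit G h v) = Finset.univ.sup h + 1 := by
  rw [sup_univ_eq_max _ v, sup_compl_deposit, hσ.deposit_self, hv, add_comm]
  exact max_eq_left ((sup_compl_le_sup_univ h v).trans (Nat.le_succ _))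

lemma topGap_deposit_of_sup_compl_eq (hσ : IsAntipode G σ)
    (hv : ({σ v}ᶜ : Finset V).sup h = Finset.univ.sup h) :
    topGap (deposit G h v) = Finset.univ.sup h + 1 - ({v}ᶜ : Finset V).sup h := by
  have htop : Finset.univ.sup (deposit G h v) = deposit G h v v := by
    rw [hσ.sup_deposit_of_sup_compl_eq hv, hσ.deposit_self, hv, add_comm]
  rw [topGap_eq_sup_univ_sub htop, hσ.sup_deposit_of_sup_compl_eq hv, sup_compl_deposit]

lemma sup_compl_deposit_antipode (hσ : IsAntipode G σ) (h : V → ℕ) (x : V) :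
    ({x}ᶜ : Finset V).sup (deposit G h (σ x)) = 1 + ({x}ᶜ : Finset V).sup h := by
  have hself : deposit G h (σ x) (σ x) = 1 + ({x}ᶜ : Finset V).sup h := by
    rw [hσ.deposit_self, hσ.involutive]
  refine le_antisymm (Finset.sup_le fun y hy => ?_) ?_
  · obtain rfl | hyx := eq_or_ne y (σ x)
    · exact hself.le
    · rw [deposit_of_ne hyx]
      exact (Finset.le_sup hy).trans (Nat.le_add_left _ _)
  · rw [← hself]
    exact Finset.le_sup (by simpa using hσ.apply_ne_self x)

lemma sup_deposit_antipode (hσ : IsAntipode G σ) (hx : ({x}ᶜ : Finset V).sup h < h x) :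
    Finset.univ.sup (deposit G h (σ x)) = Finset.univ.sup h := by
  rw [sup_univ_eq_max _ x, sup_univ_eq_max h x, hσ.sup_compl_deposit_antipode,
    deposit_of_ne (hσ.apply_ne_self x).symm, max_eq_left hx.le, max_eq_left (by lia)]

lemma topGap_deposit_antipode (hσ : IsAntipode G σ) (hx : ({x}ᶜ : Finset V).sup h < h x) :
    topGap (deposit G h (σ x)) + 1 = topGap h := by
  have hother := hσ.sup_compl_deposit_antipode h x
  have hself : deposit G h (σ x) x = h x := deposit_of_ne (hσ.apply_ne_self x).symm
  rw [topGap_eq_of_sup_compl_le (x := x) (by lia), topGap_eq_of_sup_compl_le hx.le, hother, hself]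
  lia

lemma gapPotential_deposit_of_sup_compl_eq (hσ : IsAntipode G σ)
    (hσv : ({σ v}ᶜ : Finset V).sup h = Finset.univ.sup h)
    (hv : ({v}ᶜ : Finset V).sup h = Finset.univ.sup h) :
    gapPotential r c (deposit G h v) = (Finset.univ.sup h : ℕ) + 1 + c * r := by
  rw [gapPotential, hσ.sup_deposit_of_sup_compl_eq hσv, hσ.topGap_deposit_of_sup_compl_eq hσv, hv]
  simp

lemma gapPotential_deposit_of_sup_univ_eq (hσ : IsAntipode G σ) (hx : Finset.univ.sup h = h x) :
    gapPotential r c (deposit G h x) =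
      (Finset.univ.sup h : ℕ) + 1 + c * r ^ (topGap h + 1) := by
  have hσx := sup_compl_eq_of_ne hx (hσ.apply_ne_self x).symm
  rw [gapPotential, hσ.sup_deposit_of_sup_compl_eq hσx, hσ.topGap_deposit_of_sup_compl_eq hσx,
    Nat.sub_add_comm (sup_compl_le_sup_univ h x), ← topGap_eq_sup_univ_sub hx, Nat.cast_succ]

lemma gapPotential_deposit_antipode (hσ : IsAntipode G σ) (hx : ({x}ᶜ : Finset V).sup h < h x) :
    gapPotential r c (deposit G h (σ x)) =
      (Finset.univ.sup h : ℕ) + c * r ^ topGap (deposit G h (σ x)) := by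
  rw [gapPotential, hσ.sup_deposit_antipode hx]

lemma sum_gapPotential_deposit_sub_of_topGap_pos (hσ : IsAntipode G σ)
    (hgap : 0 < topGap h) (hr : r ^ 2 + 1 = Fintype.card V * r) :
    ∑ v, (gapPotential r c (deposit G h v) - gapPotential r c h) =
      Fintype.card V - 1 + (Fintype.card V - 2) * (c * r) := by
  obtain ⟨x, -, hlt⟩ := Finset.lt_sup_iff.1 hgap
  rw [Nat.sub_pos_iff_lt] at hlt
  have hx : Finset.univ.sup h = h x := by rw [sup_univ_eq_max h x, max_eq_left hlt.le]
  have hsucc := hσ.topGap_deposit_antipode hlt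
  have hother (v : V) (hv : v ∈ ({x, σ x}ᶜ : Finset V)) :
      gapPotential r c (deposit G h v) - gapPotential r c h = 1 + c * r - c * r ^ topGap h := by
    simp only [Finset.mem_compl, Finset.mem_insert, Finset.mem_singleton, not_or] at hv
    have hxσv : x ≠ σ v := fun e => hv.2 (hσ.involutive.eq_iff.1 e.symm)
    rw [hσ.gapPotential_deposit_of_sup_compl_eq (sup_compl_eq_of_ne hx hxσv)
      (sup_compl_eq_of_ne hx (Ne.symm hv.1)), gapPotential]
    ring
  rw [← Finset.sum_compl_add_sum {x, σ x}, Finset.sum_congr rfl hother, Finset.sum_const,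
    Finset.card_compl, nsmul_eq_mul, Nat.cast_sub (Finset.card_le_univ _),
    Finset.sum_pair (hσ.apply_ne_self x).symm, Finset.card_pair (hσ.apply_ne_self x).symm,
    hσ.gapPotential_deposit_of_sup_univ_eq hx, hσ.gapPotential_deposit_antipode hlt,
    gapPotential, ← hsucc]
  push_cast
  linear_combination c * r ^ topGap (deposit G h (σ x)) * hr

lemma sum_gapPotential_deposit_sub (hσ : IsAntipode G σ)
    (hr : r ^ 2 + 1 = Fintype.card V * r) (hc : c * (Fintype.card V - 2 * r) = 1) (h : V → ℕ) :
    ∑ v, (gapPotential r c (deposit G h v) - gapPotential r c h) =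
      Fintype.card V * (1 - c * (1 - r)) := by
  obtain hgap | hgap := (topGap h).eq_zero_or_pos
  · have hincr (v : V) :
        gapPotential r c (deposit G h v) - gapPotential r c h = 1 - c * (1 - r) := by
      rw [hσ.gapPotential_deposit_of_sup_compl_eq (sup_compl_eq_of_topGap_eq_zero hgap _)
        (sup_compl_eq_of_topGap_eq_zero hgap v), gapPotential, hgap]
      ring
    simp only [hincr, Finset.sum_const, Finset.card_univ, nsmul_eq_mul]
  · rw [hσ.sum_gapPotential_deposit_sub_of_topGap_pos hgap hr]
    linear_combination hc

end IsAntipode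

lemma exists_gapPotential_constants {N : ℝ} (hN : 2 < N) :
    ∃ r ∈ Set.Icc (0 : ℝ) 1, ∃ c : ℝ, r ^ 2 + 1 = N * r ∧ c * (N - 2 * r) = 1 ∧
      1 - c * (1 - r) = (1 + √((N - 2) / (N + 2))) / 2 := by
  have hN_pos : 0 < N + 2 := by linarith
  set s := √((N - 2) / (N + 2))
  have hs_pos : 0 < s := Real.sqrt_pos.2 (div_pos (by linarith) hN_pos)
  have hs_sq : (N + 2) * s ^ 2 = N - 2 := by
    rw [Real.sq_sqrt (div_nonneg (by linarith) hN_pos.le)]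
    field_simp
  have hs_le : s ≤ 1 := Real.sqrt_le_one.2 ((div_le_one hN_pos).2 (by linarith))
  -- `r` is the smaller root of `r ^ 2 - N * r + 1`; then `N - 2 * r = √(N ^ 2 - 4) = (N + 2) * s`.
  refine ⟨(1 - s) / (1 + s), ⟨div_nonneg (by linarith) (by linarith),
    div_le_one_of_le₀ (by linarith) (by linarith)⟩, 1 / ((N + 2) * s), ?_, ?_, ?_⟩
  · field_simp
    linear_combination hs_sq
  · field_simp
    linear_combination -hs_sq
  · field_simp
    linear_combination -s * hs_sq

theorem stmt3_general {V : Type*} [Fintype V] {G : SimpleGraph V}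
    (hG : ∀ x, ∃! y, Gᶜ.Adj x y) (hV : 2 < Fintype.card V) :
    IsGrowthRate G (Fintype.card V / 2 *
      (1 + √((Fintype.card V - 2) / (Fintype.card V + 2)))) := by
  choose σ hσ hσ_unique using hG
  have hσ_antipode : IsAntipode G σ := fun x y => ⟨hσ_unique x y, fun hy => hy ▸ hσ x⟩
  obtain ⟨r, hr, c, hr_eq, hc_eq, hβ⟩ :=
    exists_gapPotential_constants (N := Fintype.card V) (by exact_mod_cast hV)
  have hdrift (h : V → ℕ) := hσ_antipode.sum_gapPotential_deposit_sub hr_eq hc_eq h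
  simp only [hβ] at hdrift
  convert isGrowthRate_of_potential (hσ_antipode.connected hV)
    (abs_gapPotential_sub_sup_le hr c) (by positivity) hdrift using 1
  ring

lemma existsUnique_compl_cycleFour_adj (x : Fin 4) : ∃! y, cycleFourᶜ.Adj x y := by
  refine ⟨x + 2, ?_, fun y => ?_⟩
  · fin_cases x <;> simp [cycleFour]
  · simp only [SimpleGraph.compl_adj, cycleFour, SimpleGraph.fromRel_adj]
    revert x y
    decide

theorem stmt3 : IsGrowthRate cycleFour (2 + 2 / Real.sqrt 3) := by
  convert stmt3_general existsUnique_compl_cycleFour_adj (by simp) using 1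
  norm_num
  ring
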